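/- arXiv:2207.03140 — 4 statements merged into one kernel-verified Lean document; each statement's English description precedes it below -/
import Mathlib

section
/- Let n, m, k be natural numbers with m ≤ n and k ≥ m. Let L be an m-dimensional linear subspace of 𝔽₂ⁿ. If x₁, …, x_k are drawn independently and uniformly at random from L, then the probability that the linear span of {x₁, …, x_k} equals L is at least 1 − 2^(m−k). -/
/-! A tuple fails to span `V` exactly when some nonzero functional `f` kills all its entries. For a
fixed `f ≠ 0`, a uniformly random `k`-tuple is killed with probability `q ^ (-k)`, where `q` is the
size of the scalar field, and there are at most `q ^ dim V` functionals; conclude by the union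
bound. -/

open Module

theorem natCard_ker_mul_natCard_of_surjective {R M N : Type*} [Ring R] [AddCommGroup M]
    [Module R M] [AddCommGroup N] [Module R N] {f : M →ₗ[R] N} (hf : Function.Surjective f) :
    Nat.card (LinearMap.ker f) * Nat.card N = Nat.card M := by
  rw [← Nat.card_congr (f.quotKerEquivOfSurjective hf).toEquiv,
    ← Submodule.card_eq_card_quotient_mul_card]

theorem span_range_coe_eq_iff {R M ι : Type*} [Semiring R] [AddCommMonoid M] [Module R M]
    {p : Submodule R M} {x : ι → p} :
    Submodule.span R (Set.range fun i => (x i : M)) = p ↔ Submodule.span R (Set.range x) = ⊤ :=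
  (Submodule.span_range_subtype_eq_top_iff p fun i => (x i).2).symm

section Field

variable {K V ι : Type*} [Field K] [AddCommGroup V] [Module K V]

theorem natCard_ker_compLeft_mul_pow [Finite ι] {f : Dual K V} (hf : f ≠ 0) :
    Nat.card (LinearMap.ker (f.compLeft ι)) * Nat.card K ^ Nat.card ι = Nat.card (ι → V) := by
  have hsurj : Function.Surjective (f.compLeft ι) := (LinearMap.surjective hf).comp_left
  rw [← Nat.card_fun, natCard_ker_mul_natCard_of_surjective hsurj]

theorem exists_mem_ker_compLeft_of_span_range_ne_top {x : ι → V}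
    (hx : Submodule.span K (Set.range x) ≠ ⊤) :
    ∃ f : Dual K V, f ≠ 0 ∧ x ∈ LinearMap.ker (f.compLeft ι) := by
  obtain ⟨f, hf, hle⟩ := Submodule.exists_le_ker_of_lt_top _ hx.lt_top
  exact ⟨f, hf, funext fun i => hle (Submodule.subset_span ⟨i, rfl⟩)⟩

variable (K V) in
theorem natCard_dual [FiniteDimensional K V] : Nat.card (Dual K V) = Nat.card K ^ finrank K V := by
  rw [natCard_eq_pow_finrank (K := K), Subspace.dual_finrank_eq]

variable [Finite K] [FiniteDimensional K V] [Finite ι]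

variable (K V ι) in
theorem ncard_span_range_ne_top_mul_pow_le :
    {x : ι → V | Submodule.span K (Set.range x) ≠ ⊤}.ncard * Nat.card K ^ Nat.card ι ≤
      Nat.card K ^ finrank K V * Nat.card (ι → V) := by
  have : Finite V := finite_of_finite K
  have : Finite (Dual K V) := finite_of_finite K
  have := Fintype.ofFinite {f : Dual K V // f ≠ 0}
  have hcover : {x : ι → V | Submodule.span K (Set.range x) ≠ ⊤} ⊆
      ⋃ f : {f : Dual K V // f ≠ 0}, (LinearMap.ker (f.1.compLeft ι) : Set (ι → V)) := by
    intro x hx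
    obtain ⟨f, hf, hxf⟩ := exists_mem_ker_compLeft_of_span_range_ne_top hx
    exact Set.mem_iUnion.2 ⟨⟨f, hf⟩, hxf⟩
  calc {x : ι → V | Submodule.span K (Set.range x) ≠ ⊤}.ncard * Nat.card K ^ Nat.card ι
    _ ≤ (∑ f : {f : Dual K V // f ≠ 0}, Nat.card (LinearMap.ker (f.1.compLeft ι))) *
          Nat.card K ^ Nat.card ι := by
        gcongr
        exact (Set.ncard_le_ncard hcover).trans (Set.ncard_iUnion_le_of_fintype _)
    _ = Nat.card {f : Dual K V // f ≠ 0} * Nat.card (ι → V) := by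
        rw [Finset.sum_mul, Finset.sum_congr rfl fun f _ => natCard_ker_compLeft_mul_pow f.2,
          Finset.sum_const, smul_eq_mul, Finset.card_univ, Fintype.card_eq_nat_card]
    _ ≤ Nat.card K ^ finrank K V * Nat.card (ι → V) := by
        rw [← natCard_dual]
        gcongr
        exact Finite.card_subtype_le _

variable (K V ι) in
theorem ncard_span_range_ne_top_div_le :
    ({x : ι → V | Submodule.span K (Set.range x) ≠ ⊤}.ncard : ℝ) / Nat.card (ι → V) ≤
      (Nat.card K : ℝ) ^ ((finrank K V : ℤ) - Nat.card ι) := by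
  have : Finite V := finite_of_finite K
  have hq : (0 : ℝ) < Nat.card K := mod_cast Nat.card_pos
  have hN : (0 : ℝ) < Nat.card (ι → V) := mod_cast Nat.card_pos
  rw [zpow_sub₀ hq.ne', zpow_natCast, zpow_natCast, div_le_div_iff₀ hN (by positivity)]
  exact_mod_cast ncard_span_range_ne_top_mul_pow_le K V ι

end Field

theorem stmt_0_general {K V ι : Type*} [Field K] [Finite K] [AddCommGroup V] [Module K V]
    [Finite ι] (L : Submodule K V) [FiniteDimensional K L] :
    (1 : ℝ) - (Nat.card K : ℝ) ^ ((finrank K L : ℤ) - (Nat.card ι : ℤ)) ≤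
      (Nat.card {x : ι → L // Submodule.span K (Set.range fun i => (x i : V)) = L} : ℝ) /
        (Nat.card (ι → L) : ℝ) := by
  have : Finite L := finite_of_finite K
  have hN : (Nat.card (ι → L) : ℝ) ≠ 0 := mod_cast Nat.card_pos.ne'
  have hcompl : (Nat.card {x : ι → L // Submodule.span K (Set.range x) = ⊤} : ℝ) +
      {x : ι → L | Submodule.span K (Set.range x) ≠ ⊤}.ncard = Nat.card (ι → L) :=
    mod_cast Set.ncard_add_ncard_compl {x : ι → L | Submodule.span K (Set.range x) = ⊤}
  simp only [span_range_coe_eq_iff]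
  rw [eq_sub_of_add_eq hcompl, sub_div, div_self hN]
  gcongr
  exact ncard_span_range_ne_top_div_le K L ι

/-- If `L` is an `m`-dimensional linear subspace of `𝔽₂ⁿ` and `x₁, …, x_k` (with `k ≥ m`)
are drawn independently and uniformly at random from `L`, then with probability at least
`1 - 2^(m-k)` the linear span of the samples equals `L`. -/
theorem stmt_0 (n m k : ℕ) (hmn : m ≤ n) (hkm : m ≤ k)
    (L : Submodule (ZMod 2) (Fin n → ZMod 2))
    (hdim : Module.finrank (ZMod 2) L = m) :
    (1 : ℝ) - (2 : ℝ) ^ ((m : ℤ) - (k : ℤ)) ≤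
      (Nat.card {x : Fin k → L //
          Submodule.span (ZMod 2)
            (Set.range fun i => ((x i : L) : Fin n → ZMod 2)) = L} : ℝ) /
        (Nat.card (Fin k → L) : ℝ) := by
  simpa only [hdim, Nat.card_zmod, Nat.card_fin, Nat.cast_ofNat] using
    stmt_0_general (ι := Fin k) L
end

section
/- Let n, m, k be natural numbers with m ≤ n and k ≥ m + 1. Let L be an m-dimensional linear subspace of 𝔽₂ⁿ, let t ∈ 𝔽₂ⁿ, and let A = t + L be the corresponding affine coset. If x₁, …, x_k are drawn independently and uniformly at random from A, then the probability that the linear span of {x₂ + x₁, x₃ + x₁, …, x_k + x₁} equals L is at least 1 − 2^(m−(k−1)). (Over 𝔽₂, addition and subtraction coincide, so x_i + x₁ = x_i − x₁.) -/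
/-!
A tuple `y` of vectors of a finite space `V` over `𝔽_q` fails to span `V` exactly when some nonzero
functional kills all of its entries. Each of these fewer than `q ^ dim V` functionals kills a
uniformly random vector with probability `1 / q`, so by the union bound `r` independent vectors fail
to span with probability at most `q ^ (dim V - r)`. For `k` random points of an affine space over
`V`, the `k - 1` differences with a chosen one of them are again independent and uniform in `V`.
-/

section LinearSpan

variable {K V : Type*} [Field K] [AddCommGroup V] [Module K V]

theorem card_ker_mul_card_eq_card {f : Module.Dual K V} (hf : f ≠ 0) :
    Nat.card f.ker * Nat.card K = Nat.card V := by
  rw [f.ker.card_eq_card_quotient_mul_card,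
    Nat.card_congr (f.quotKerEquivOfSurjective (f.surjective hf)).toEquiv, mul_comm]

variable {ι : Type*}

theorem span_range_ne_top_iff_exists_dual (y : ι → V) :
    Submodule.span K (Set.range y) ≠ ⊤ ↔ ∃ f : Module.Dual K V, f ≠ 0 ∧ ∀ i, f (y i) = 0 := by
  rw [Ne, ← Submodule.dualAnnihilator_eq_bot_iff, ← Ne, Submodule.ne_bot_iff]
  simp only [← SetLike.mem_coe, Submodule.coe_dualAnnihilator_span]
  simp [Set.range_subset_iff, and_comm]

theorem card_forall_apply_eq_zero_mul_pow_eq_card [Finite ι] {f : Module.Dual K V} (hf : f ≠ 0) :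
    Nat.card {y : ι → V // ∀ i, f (y i) = 0} * Nat.card K ^ Nat.card ι = Nat.card (ι → V) := by
  have h_pi : Nat.card {y : ι → V // ∀ i, f (y i) = 0} = Nat.card (ι → f.ker) :=
    Nat.card_congr (Equiv.subtypePiEquivPi (p := fun _ v ↦ v ∈ f.ker))
  rw [h_pi, Nat.card_fun, ← mul_pow, card_ker_mul_card_eq_card hf, Nat.card_fun]

variable [FiniteDimensional K V]

theorem card_dual_eq : Nat.card (Module.Dual K V) = Nat.card V := by
  rw [Module.natCard_eq_pow_finrank (K := K), Subspace.dual_finrank_eq,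
    ← Module.natCard_eq_pow_finrank]

variable [Finite K] [Finite ι]

theorem card_span_range_ne_top_mul_pow_le :
    Nat.card {y : ι → V // Submodule.span K (Set.range y) ≠ ⊤} * Nat.card K ^ Nat.card ι ≤
      Nat.card V * Nat.card (ι → V) := by
  have : Finite (Module.Dual K V) := Module.finite_of_finite K
  have := Fintype.ofFinite {f : Module.Dual K V // f ≠ 0}
  let killed (f : {f : Module.Dual K V // f ≠ 0}) : Set (ι → V) := {y | ∀ i, f.1 (y i) = 0}
  have h_cover : {y : ι → V | Submodule.span K (Set.range y) ≠ ⊤} = ⋃ f, killed f := by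
    ext y
    simpa [killed] using span_range_ne_top_iff_exists_dual y
  have h_killed (f : {f : Module.Dual K V // f ≠ 0}) :
      (killed f).ncard * Nat.card K ^ Nat.card ι = Nat.card (ι → V) :=
    card_forall_apply_eq_zero_mul_pow_eq_card f.2
  calc
    _ = (⋃ f, killed f).ncard * Nat.card K ^ Nat.card ι := by
        rw [← h_cover, ← Nat.card_coe_set_eq, Set.coe_ofPred]
    _ ≤ (∑ f, (killed f).ncard) * Nat.card K ^ Nat.card ι := by
        gcongr
        exact Set.ncard_iUnion_le_of_fintype killed
    _ = Nat.card {f : Module.Dual K V // f ≠ 0} * Nat.card (ι → V) := by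
        simp only [Finset.sum_mul, h_killed, Finset.sum_const, Finset.card_univ, smul_eq_mul,
          Nat.card_eq_fintype_card]
    _ ≤ Nat.card V * Nat.card (ι → V) := by
        gcongr
        exact (Finite.card_subtype_le _).trans_eq card_dual_eq

theorem one_sub_zpow_le_card_span_range_eq_top_div :
    1 - (Nat.card K : ℝ) ^ ((Module.finrank K V : ℤ) - Nat.card ι) ≤
      (Nat.card {y : ι → V // Submodule.span K (Set.range y) = ⊤} : ℝ) / Nat.card (ι → V) := by
  classical
  have : Finite V := Module.finite_of_finite K
  have h_compl : Nat.card {y : ι → V // Submodule.span K (Set.range y) = ⊤} +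
      Nat.card {y : ι → V // Submodule.span K (Set.range y) ≠ ⊤} = Nat.card (ι → V) := by
    rw [← Nat.card_sum]
    exact Nat.card_congr (Equiv.sumCompl _)
  have h_bad : (Nat.card {y : ι → V // Submodule.span K (Set.range y) ≠ ⊤} : ℝ) *
      Nat.card K ^ Nat.card ι ≤ Nat.card V * Nat.card (ι → V) :=
    mod_cast card_span_range_ne_top_mul_pow_le
  have hK : (0 : ℝ) < Nat.card K := mod_cast Nat.card_pos
  have h_total : (0 : ℝ) < Nat.card (ι → V) := mod_cast Nat.card_pos
  have h_bound : (Nat.card K : ℝ) ^ ((Module.finrank K V : ℤ) - Nat.card ι) =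
      Nat.card V / Nat.card K ^ Nat.card ι := by
    rw [zpow_sub₀ hK.ne', zpow_natCast, zpow_natCast,
      Module.natCard_eq_pow_finrank (K := K) (V := V), Nat.cast_pow]
  have h_good : (Nat.card {y : ι → V // Submodule.span K (Set.range y) = ⊤} : ℝ) =
      Nat.card (ι → V) - Nat.card {y : ι → V // Submodule.span K (Set.range y) ≠ ⊤} :=
    eq_sub_of_add_eq (mod_cast h_compl)
  rw [h_bound, h_good, sub_div, div_self h_total.ne']
  gcongr 1 - ?_
  rwa [div_le_div_iff₀ h_total (by positivity)]

end LinearSpan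

section AffineSpan

variable {K V P ι : Type*} [AddCommGroup V] [AddTorsor V P]

/-- The bijection sending a tuple of points `x` of an affine space to its base point `x i₀` and the
differences `x i -ᵥ x i₀` for `i ≠ i₀`. It shows that the differences of independent uniform points
are independent uniform vectors. -/
def differencesEquiv [DecidableEq ι] (i₀ : ι) : (ι → P) ≃ P × ({i // i ≠ i₀} → V) :=
  (Equiv.funSplitAt i₀ P).trans <|
    Equiv.prodShear (Equiv.refl P) fun p ↦ Equiv.piCongrRight fun _ ↦ (Equiv.vaddConst p).symm

section Ring

variable [Ring K] [Module K V]

theorem vectorSpan_range_eq_span_range_differencesEquiv [DecidableEq ι] (i₀ : ι) (x : ι → P) :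
    vectorSpan K (Set.range x) =
      Submodule.span K (Set.range (differencesEquiv (V := V) i₀ x).2) :=
  vectorSpan_range_eq_span_range_vsub_right_ne K x i₀

theorem card_vectorSpan_range_eq_top (i₀ : ι) :
    Nat.card {x : ι → P // vectorSpan K (Set.range x) = ⊤} =
      Nat.card P * Nat.card {y : {i // i ≠ i₀} → V // Submodule.span K (Set.range y) = ⊤} := by
  classical
  rw [mul_comm, ← Nat.card_prod]
  refine Nat.card_congr <| Equiv.trans ?_ Equiv.prodSubtypeFstEquivSubtypeProd
  exact ((differencesEquiv i₀).trans (Equiv.prodComm _ _)).subtypeEquiv fun x ↦ by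
    rw [vectorSpan_range_eq_span_range_differencesEquiv i₀]
    rfl

theorem vectorSpan_range_coe_eq_direction_iff (S : AffineSubspace K P) [Nonempty S]
    (x : ι → S) :
    vectorSpan K (Set.range fun i ↦ (x i : P)) = S.direction ↔
      vectorSpan K (Set.range x) = ⊤ := by
  have h : vectorSpan K (Set.range fun i ↦ (x i : P)) =
      (vectorSpan K (Set.range x)).map S.direction.subtype := by
    rw [← S.subtype_linear, AffineMap.map_vectorSpan, ← Set.range_comp]
    rfl
  rw [h, ← (Submodule.map_injective_of_injective S.direction.injective_subtype).eq_iff,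
    Submodule.map_subtype_top]

end Ring

variable [Field K] [Finite K] [Module K V] [FiniteDimensional K V] [Finite ι] [Nonempty ι]

theorem one_sub_zpow_le_card_vectorSpan_range_eq_top_div :
    1 - (Nat.card K : ℝ) ^ ((Module.finrank K V : ℤ) - ((Nat.card ι : ℤ) - 1)) ≤
      (Nat.card {x : ι → P // vectorSpan K (Set.range x) = ⊤} : ℝ) / Nat.card (ι → P) := by
  classical
  obtain ⟨i₀⟩ := ‹Nonempty ι›
  have : Nonempty P := AddTorsor.nonempty
  have : Finite V := Module.finite_of_finite K
  have : Finite P := .of_equiv V (Equiv.vaddConst (Classical.arbitrary P))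
  have hP : (Nat.card P : ℝ) ≠ 0 := mod_cast Nat.card_pos.ne'
  have h_diff : (Nat.card {i // i ≠ i₀} : ℤ) = Nat.card ι - 1 := by
    rw [← Nat.card_congr (Equiv.optionSubtypeNe i₀), Finite.card_option]
    simp
  rw [card_vectorSpan_range_eq_top i₀, Nat.card_congr (differencesEquiv (V := V) i₀), Nat.card_prod,
    Nat.cast_mul, Nat.cast_mul, mul_div_mul_left _ _ hP, ← h_diff]
  exact one_sub_zpow_le_card_span_range_eq_top_div

end AffineSpan

theorem image_add_left_eq_coe_mk' {K V : Type*} [Ring K] [AddCommGroup V] [Module K V] (t : V)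
    (L : Submodule K V) : (fun v ↦ t + v) '' (L : Set V) = AffineSubspace.mk' t L := by
  ext v
  simp [AffineSubspace.mem_mk', sub_eq_neg_add]

theorem vectorSpan_range_eq_span_add {V ι : Type*} [AddCommGroup V] [Module (ZMod 2) V]
    (x : ι → V) (i₀ : ι) :
    vectorSpan (ZMod 2) (Set.range x) =
      Submodule.span (ZMod 2) {v | ∃ i, i ≠ i₀ ∧ v = x i + x i₀} := by
  rw [vectorSpan_range_eq_span_range_vsub_right_ne _ _ i₀]
  congr 1
  ext v
  simp [ZModModule.sub_eq_add, eq_comm]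

theorem stmt_1_general {K V P ι : Type*} [Field K] [Finite K] [AddCommGroup V] [Module K V]
    [AddTorsor V P] [Finite ι] [Nonempty ι] (S : AffineSubspace K P) [Nonempty S]
    [FiniteDimensional K S.direction] :
    1 - (Nat.card K : ℝ) ^ ((Module.finrank K S.direction : ℤ) - ((Nat.card ι : ℤ) - 1)) ≤
      (Nat.card {x : ι → S // vectorSpan K (Set.range fun i ↦ (x i : P)) = S.direction} : ℝ) /
        Nat.card (ι → S) := by
  simp only [vectorSpan_range_coe_eq_direction_iff]
  exact one_sub_zpow_le_card_vectorSpan_range_eq_top_div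

/-- If `A = t + L` is a coset of an `m`-dimensional linear subspace `L` of `𝔽₂ⁿ` and
`x₁, …, x_k` (with `k ≥ m + 1`) are drawn independently and uniformly at random from `A`,
then with probability at least `1 - 2^(m-(k-1))` the linear span of
`{x₂ + x₁, …, x_k + x₁}` equals `L`. -/
theorem stmt_1 (n m k : ℕ) (hmn : m ≤ n) (hkm : m + 1 ≤ k)
    (L : Submodule (ZMod 2) (Fin n → ZMod 2))
    (hdim : Module.finrank (ZMod 2) L = m)
    (t : Fin n → ZMod 2)
    (A : Set (Fin n → ZMod 2)) (hA : A = (fun v => t + v) '' (L : Set (Fin n → ZMod 2)))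
    (i₀ : Fin k) (hi₀ : (i₀ : ℕ) = 0) :
    (1 : ℝ) - (2 : ℝ) ^ ((m : ℤ) - ((k : ℤ) - 1)) ≤
      (Nat.card {x : Fin k → A //
          Submodule.span (ZMod 2)
            {v : Fin n → ZMod 2 | ∃ i : Fin k, i ≠ i₀ ∧
              v = ((x i : A) : Fin n → ZMod 2) + ((x i₀ : A) : Fin n → ZMod 2)} = L} : ℝ) /
        (Nat.card (Fin k → A) : ℝ) := by
  obtain rfl : A = AffineSubspace.mk' t L := hA.trans (image_add_left_eq_coe_mk' t L)
  have : Nonempty (Fin k) := ⟨i₀⟩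
  have h_dir : Module.finrank (ZMod 2) (AffineSubspace.mk' t L).direction = m := by
    rw [AffineSubspace.direction_mk', hdim]
  have h := stmt_1_general (ι := Fin k) (AffineSubspace.mk' t L)
  simp only [h_dir, AffineSubspace.direction_mk', vectorSpan_range_eq_span_add _ i₀] at h
  simpa using h
end

section
/- Let X be a finite set and let ψ, φ : X → ℂ satisfy ∑_{x∈X} |ψ(x)|² = 1 and ∑_{x∈X} |φ(x)|² = 1. Then (1/2)·∑_{x∈X} | |ψ(x)|² − |φ(x)|² | ≤ √(1 − |⟨ψ, φ⟩|²), where ⟨ψ, φ⟩ = ∑_{x∈X} conj(ψ(x))·φ(x). -/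
/-!
Factor `|‖f x‖² - ‖g x‖²|` as `|‖f x‖ - ‖g x‖| * |‖f x‖ + ‖g x‖|`, apply the Cauchy–Schwarz
inequality to the sum over `x`, and expand the two resulting sums of squares: their product is
`(∑ ‖f x‖² + ∑ ‖g x‖²)² - 4 (∑ ‖f x‖ ‖g x‖)²`, and `∑ ‖f x‖ ‖g x‖` dominates `|⟨f, g⟩|`.
-/

theorem sum_sub_sq_mul_sum_add_sq {ι R : Type*} [CommRing R] (s : Finset ι) (a b : ι → R) :
    (∑ i ∈ s, (a i - b i) ^ 2) * ∑ i ∈ s, (a i + b i) ^ 2 =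
      (∑ i ∈ s, a i ^ 2 + ∑ i ∈ s, b i ^ 2) ^ 2 - 4 * (∑ i ∈ s, a i * b i) ^ 2 := by
  simp only [sub_sq, add_sq, Finset.sum_add_distrib, Finset.sum_sub_distrib, mul_assoc,
    ← Finset.mul_sum]
  ring

theorem sq_sum_abs_sq_sub_sq_le {ι R : Type*} [CommRing R] [LinearOrder R] [IsStrictOrderedRing R]
    (s : Finset ι) (a b : ι → R) :
    (∑ i ∈ s, |a i ^ 2 - b i ^ 2|) ^ 2 ≤
      (∑ i ∈ s, a i ^ 2 + ∑ i ∈ s, b i ^ 2) ^ 2 - 4 * (∑ i ∈ s, a i * b i) ^ 2 :=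
  calc (∑ i ∈ s, |a i ^ 2 - b i ^ 2|) ^ 2
      = (∑ i ∈ s, |a i - b i| * |a i + b i|) ^ 2 := by
        simp only [sq_sub_sq, abs_mul, mul_comm]
    _ ≤ (∑ i ∈ s, |a i - b i| ^ 2) * ∑ i ∈ s, |a i + b i| ^ 2 :=
        Finset.sum_mul_sq_le_sq_mul_sq s _ _
    _ = (∑ i ∈ s, a i ^ 2 + ∑ i ∈ s, b i ^ 2) ^ 2 - 4 * (∑ i ∈ s, a i * b i) ^ 2 := by
        simp only [sq_abs, sum_sub_sq_mul_sum_add_sq]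

section InnerProductSpace

variable {ι 𝕜 E : Type*} [RCLike 𝕜] [SeminormedAddCommGroup E] [InnerProductSpace 𝕜 E]

variable (𝕜) in
theorem norm_sum_inner_le_sum_norm_mul_norm (s : Finset ι) (f g : ι → E) :
    ‖∑ i ∈ s, inner 𝕜 (f i) (g i)‖ ≤ ∑ i ∈ s, ‖f i‖ * ‖g i‖ :=
  norm_sum_le_of_le s fun i _ => norm_inner_le_norm (f i) (g i)

variable (𝕜) in
/-- The right-hand side is half the trace norm of `|f⟩⟨f| - |g⟩⟨g|`, for `f` and `g` of arbitrary
norms. -/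
theorem stmt_4_general (s : Finset ι) (f g : ι → E) :
    (1 / 2) * ∑ i ∈ s, |‖f i‖ ^ 2 - ‖g i‖ ^ 2| ≤
      Real.sqrt (((∑ i ∈ s, ‖f i‖ ^ 2 + ∑ i ∈ s, ‖g i‖ ^ 2) / 2) ^ 2 -
        ‖∑ i ∈ s, inner 𝕜 (f i) (g i)‖ ^ 2) := by
  have sq_sum_le := sq_sum_abs_sq_sub_sq_le s (‖f ·‖) (‖g ·‖)
  have sq_overlap_le : ‖∑ i ∈ s, inner 𝕜 (f i) (g i)‖ ^ 2 ≤ (∑ i ∈ s, ‖f i‖ * ‖g i‖) ^ 2 := by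
    gcongr
    exact norm_sum_inner_le_sum_norm_mul_norm 𝕜 s f g
  apply Real.le_sqrt_of_sq_le
  linarith

end InnerProductSpace

/-- The total variation distance between the Born distributions of two unit vectors
`ψ, φ : X → ℂ` is at most `√(1 − |⟨ψ, φ⟩|²)`. -/
theorem stmt_4 (X : Type*) [Fintype X] (ψ φ : X → ℂ)
    (hψ : ∑ x, ‖ψ x‖ ^ 2 = 1) (hφ : ∑ x, ‖φ x‖ ^ 2 = 1) :
    (1 / 2) * ∑ x, |‖ψ x‖ ^ 2 - ‖φ x‖ ^ 2| ≤
      Real.sqrt (1 - ‖∑ x, (starRingEnd ℂ) (ψ x) * φ x‖ ^ 2) := by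
  simpa [hψ, hφ, RCLike.inner_apply, mul_comm] using stmt_4_general ℂ Finset.univ ψ φ
end

section
/- Let n ≥ 1, let ε ∈ (0, 1/2), let Q be a probability distribution on 𝔽₂ⁿ × 𝔽₂, and let s, t ∈ 𝔽₂ⁿ. If TV(Q, P_s) ≤ ε and TV(Q, P_t) < 1/2 − ε, then t = s. -/
/-!
Two distinct homomorphisms out of a finite group agree on a proper subgroup, hence on at most half
of the group. The total variation distance between the uniform distributions on the graphs of two
functions is the proportion of points where they differ, so distinct homomorphisms have graph
distributions at distance at least `1 / 2`, and by the triangle inequality no `Q` is `ε`-close to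
one and `(1 / 2 - ε)`-close to the other. Parities are the homomorphisms `𝔽₂ⁿ → 𝔽₂`.
-/

open Finset

section TotalVariation

variable {X : Type*} [Fintype X]

/-- The total variation distance of two real-valued functions on a finite type, as half their
`ℓ¹` distance. The functions need not be probability distributions. -/
noncomputable def tvDist (P Q : X → ℝ) : ℝ :=
  (1 / 2) * ∑ x, |P x - Q x|

theorem tvDist_comm (P Q : X → ℝ) : tvDist P Q = tvDist Q P := by
  simp only [tvDist, abs_sub_comm]

theorem tvDist_triangle (P Q R : X → ℝ) : tvDist P R ≤ tvDist P Q + tvDist Q R := by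
  simp only [tvDist, ← mul_add, ← sum_add_distrib]
  gcongr
  exact abs_sub_le _ _ _

end TotalVariation

section GraphDistribution

variable {X Y : Type*} [Fintype X] [DecidableEq Y]

/-- The uniform distribution on the graph of `f`: the law of `(x, f x)` for `x` uniform in `X`. -/
noncomputable def graphDistribution (f : X → Y) (p : X × Y) : ℝ :=
  if p.2 = f p.1 then (Fintype.card X : ℝ)⁻¹ else 0

theorem sum_abs_ite_sub_ite [Fintype Y] (a b : Y) (c : ℝ) :
    ∑ y, |(if y = a then c else 0) - (if y = b then c else 0)| =
      if a ≠ b then 2 * |c| else 0 := by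
  rcases eq_or_ne a b with rfl | hab
  · simp
  · have abs_sub_eq_add (y : Y) : |(if y = a then c else 0) - (if y = b then c else 0)| =
        (if y = a then |c| else 0) + (if y = b then |c| else 0) := by
      grind
    simp [abs_sub_eq_add, sum_add_distrib, hab, two_mul]

theorem tvDist_graphDistribution [Fintype Y] (f g : X → Y) :
    tvDist (graphDistribution f) (graphDistribution g) =
      (#{x | f x ≠ g x} : ℝ) / Fintype.card X := by
  simp only [tvDist, graphDistribution, Fintype.sum_prod_type, sum_abs_ite_sub_ite,
    ← sum_filter, sum_const, nsmul_eq_mul, abs_inv, Nat.abs_cast]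
  ring

end GraphDistribution

section Homomorphisms

variable {G H : Type*} [AddGroup G] [AddMonoid H] {f g : G →+ H}

theorem two_mul_card_eqLocus_le [Finite G] (hfg : f ≠ g) :
    2 * Nat.card (f.eqLocus g) ≤ Nat.card G := by
  have eqLocus_ne_top : f.eqLocus g ≠ ⊤ := fun h ↦
    hfg (DFunLike.ext f g fun x ↦ (h ▸ AddSubgroup.mem_top x : x ∈ f.eqLocus g))
  rw [← (f.eqLocus g).card_mul_index, mul_comm]
  exact Nat.mul_le_mul_left _ (AddSubgroup.one_lt_index_of_ne_top eqLocus_ne_top)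

variable [Fintype G] [DecidableEq H]

theorem card_le_two_mul_card_filter_ne (hfg : f ≠ g) :
    Fintype.card G ≤ 2 * #{x | f x ≠ g x} := by
  have card_agree : Nat.card (f.eqLocus g) = #{x | f x = g x} :=
    Nat.subtype_card _ fun x ↦ mem_filter_univ x
  have card_split := card_filter_add_card_filter_not (s := univ) fun x ↦ f x = g x
  have agree_le := two_mul_card_eqLocus_le hfg
  rw [card_agree, Nat.card_eq_fintype_card] at agree_le
  rw [card_univ] at card_split
  lia

variable [Fintype H]

theorem half_le_tvDist_graphDistribution (hfg : f ≠ g) :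
    1 / 2 ≤ tvDist (graphDistribution f) (graphDistribution g) := by
  have card_le : (Fintype.card G : ℝ) ≤ 2 * #{x | f x ≠ g x} :=
    mod_cast card_le_two_mul_card_filter_ne hfg
  rw [tvDist_graphDistribution, le_div_iff₀ (Nat.cast_pos.2 Fintype.card_pos)]
  linarith

theorem stmt_11_general {Q : G × H → ℝ} {ε : ℝ}
    (hf : tvDist Q (graphDistribution f) ≤ ε)
    (hg : tvDist Q (graphDistribution g) < 1 / 2 - ε) :
    g = f := by
  by_contra hgf
  have triangle := tvDist_triangle (graphDistribution g) Q (graphDistribution f)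
  rw [tvDist_comm _ Q] at triangle
  linarith [half_le_tvDist_graphDistribution hgf]

end Homomorphisms

/-- If a distribution `Q` on `𝔽₂ⁿ × 𝔽₂` is `ε`-close in total variation distance to the
parity distribution `P_s` and less than `1/2 − ε`-far from `P_t`, then `t = s`. -/
theorem stmt_11 (n : ℕ) (hn : 1 ≤ n) (ε : ℝ) (hε0 : 0 < ε) (hε : ε < 1 / 2)
    (P : (Fin n → ZMod 2) → ((Fin n → ZMod 2) × ZMod 2) → ℝ)
    (hP : ∀ u : Fin n → ZMod 2, ∀ p : (Fin n → ZMod 2) × ZMod 2,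
      P u p = if p.2 = ∑ i, u i * p.1 i then (2 : ℝ) ^ (-(n : ℤ)) else 0)
    (Q : ((Fin n → ZMod 2) × ZMod 2) → ℝ)
    (hQ0 : ∀ p, 0 ≤ Q p) (hQ1 : ∑ p, Q p = 1)
    (s t : Fin n → ZMod 2)
    (hs : (1 / 2) * ∑ p, |Q p - P s p| ≤ ε)
    (ht : (1 / 2) * ∑ p, |Q p - P t p| < 1 / 2 - ε) :
    t = s := by
  have parity_eq_graph (u : Fin n → ZMod 2) :
      P u = graphDistribution (dotProductEquiv (ZMod 2) (Fin n) u).toAddMonoidHom := by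
    ext p
    simp [hP, graphDistribution, dotProduct]
  rw [parity_eq_graph] at hs ht
  exact (dotProductEquiv (ZMod 2) (Fin n)).injective
    (LinearMap.toAddMonoidHom_injective (stmt_11_general hs ht))
end
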